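/- Let P be a computability predicate and, for each a ∈ P, let Q(a) be a computability predicate such that Q(a') ⊆ Q(a) whenever a → a'. If A ∈ SN and b[x↦a] ∈ Q(a) for all a ∈ P, then λx:A.b ∈ {t | ∀a ∈ P, t a ∈ Q(a)} (computability of abstractions). -/

import Mathlib

set_option maxHeartbeats 1000000

/-! # Terms of λΠ/R (de Bruijn representation) -/

inductive Trm (F : Type) : Type
  | type : Trm F
  | kind : Trm F
  | var : ℕ → Trm F
  | sym : F → Trm F
  | pi : Trm F → Trm F → Trm F
  | app : Trm F → Trm F → Trm F
  | lam : Trm F → Trm F → Trm F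

namespace Trm

variable {F : Type}

/-- Lifting of a renaming under a binder. -/
def upRen (ρ : ℕ → ℕ) : ℕ → ℕ
  | 0 => 0
  | n + 1 => ρ n + 1

/-- Renaming of (de Bruijn) variables. -/
def rename (ρ : ℕ → ℕ) : Trm F → Trm F
  | .type => .type
  | .kind => .kind
  | .var n => .var (ρ n)
  | .sym f => .sym f
  | .pi A B => .pi (rename ρ A) (rename (upRen ρ) B)
  | .app t u => .app (rename ρ t) (rename ρ u)
  | .lam A b => .lam (rename ρ A) (rename (upRen ρ) b)

/-- Lifting of a substitution under a binder. -/
def up (σ : ℕ → Trm F) : ℕ → Trm F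
  | 0 => .var 0
  | n + 1 => rename Nat.succ (σ n)

/-- Capture-avoiding (parallel) substitution. -/
def subst (σ : ℕ → Trm F) : Trm F → Trm F
  | .type => .type
  | .kind => .kind
  | .var n => σ n
  | .sym f => .sym f
  | .pi A B => .pi (subst σ A) (subst (up σ) B)
  | .app t u => .app (subst σ t) (subst σ u)
  | .lam A b => .lam (subst σ A) (subst (up σ) b)

/-- Cons of a term on a substitution: `scons a σ` maps `0` to `a` and `n+1` to `σ n`. -/
def scons (a : Trm F) (σ : ℕ → Trm F) : ℕ → Trm F
  | 0 => a
  | n + 1 => σ n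

/-- Substitution of the first free variable: `t[x ↦ a]`. -/
def subst1 (a t : Trm F) : Trm F := subst (scons a .var) t

/-- Shifting of all free variables. -/
def shift : Trm F → Trm F := rename Nat.succ

/-- Application of a head term to a list of arguments: `appList h [t1,…,tn] = h t1 … tn`. -/
def appList (h : Trm F) : List (Trm F) → Trm F
  | [] => h
  | a :: as => appList (.app h a) as

/-- Free (de Bruijn) variables of a term. -/
def FV : Trm F → Set ℕ
  | .type => ∅
  | .kind => ∅
  | .var n => {n}
  | .sym _ => ∅
  | .pi A B => FV A ∪ {n | n + 1 ∈ FV B}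
  | .app t u => FV t ∪ FV u
  | .lam A b => FV A ∪ {n | n + 1 ∈ FV b}

/-- The class 𝕂 of kinds: `K = TYPE | Πx:t.K`. -/
def IsKind : Trm F → Prop
  | .type => True
  | .pi _ B => IsKind B
  | _ => False

/-- Sorts: `TYPE` and `KIND`. -/
def IsSort (s : Trm F) : Prop := s = .type ∨ s = .kind

/-- The product arity of a term: the number of leading products. -/
def piArity : Trm F → ℕ
  | .pi _ B => piArity B + 1
  | _ => 0

/-- Strip `n` leading products. -/
def piCodN : ℕ → Trm F → Trm F
  | 0, T => T
  | n + 1, .pi _ B => piCodN n B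
  | _ + 1, T => T

/-- The first `n` domains of the leading products, as a de Bruijn context
(type of variable `0` first, i.e. innermost first). -/
def teleN : ℕ → Trm F → List (Trm F)
  | 0, _ => []
  | n + 1, .pi A B => teleN n B ++ [A]
  | _ + 1, _ => []

/-- The full telescope of leading products, as a de Bruijn context. -/
def telescope (T : Trm F) : List (Trm F) := teleN (piArity T) T

/-- The domains of the leading products, outermost first. -/
def piDoms : Trm F → List (Trm F)
  | .pi A B => A :: piDoms B
  | _ => []

end Trm

/-- The subterm relation (reflexive and transitive). -/
inductive Subterm {F : Type} : Trm F → Trm F → Prop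
  | refl (t : Trm F) : Subterm t t
  | piL {t A B} : Subterm t A → Subterm t (.pi A B)
  | piR {t A B} : Subterm t B → Subterm t (.pi A B)
  | appL {t u v} : Subterm t u → Subterm t (.app u v)
  | appR {t u v} : Subterm t v → Subterm t (.app u v)
  | lamL {t A b} : Subterm t A → Subterm t (.lam A b)
  | lamR {t A b} : Subterm t b → Subterm t (.lam A b)

/-! # Rewriting -/

/-- A set of rewriting rules `l → r`. -/
abbrev Rules (F : Type) := Set (Trm F × Trm F)

/-- `R` is a rewriting system: for every rule `l → r`, `FV(r) ⊆ FV(l)` and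
`l` is of the form `f l⃗`. -/
def IsRewriteSystem {F : Type} (R : Rules F) : Prop :=
  ∀ p ∈ R, Trm.FV p.2 ⊆ Trm.FV p.1 ∧ ∃ (f : F) (ls : List (Trm F)), p.1 = Trm.appList (.sym f) ls

/-- A symbol is defined if it heads the left-hand side of some rule. -/
def Defined {F : Type} (R : Rules F) (f : F) : Prop :=
  ∃ (ls : List (Trm F)) (r : Trm F), (Trm.appList (.sym f) ls, r) ∈ R

/-- One-step reduction `→ = →β ∪ →R`: β-reduction together with the closure of the
rules of `R` by substitution and context. -/
inductive Red {F : Type} (R : Rules F) : Trm F → Trm F → Prop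
  | beta (A b a : Trm F) : Red R (.app (.lam A b) a) (Trm.subst1 a b)
  | rule {l r : Trm F} (σ : ℕ → Trm F) : (l, r) ∈ R → Red R (Trm.subst σ l) (Trm.subst σ r)
  | appL {t t' u} : Red R t t' → Red R (.app t u) (.app t' u)
  | appR {t u u'} : Red R u u' → Red R (.app t u) (.app t u')
  | piL {A A' B} : Red R A A' → Red R (.pi A B) (.pi A' B)
  | piR {A B B'} : Red R B B' → Red R (.pi A B) (.pi A B')
  | lamL {A A' b} : Red R A A' → Red R (.lam A b) (.lam A' b)
  | lamR {A b b'} : Red R b b' → Red R (.lam A b) (.lam A b')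

/-- Multi-step reduction `→*`. -/
def RedStar {F : Type} (R : Rules F) : Trm F → Trm F → Prop := Relation.ReflTransGen (Red R)

/-- Joinability `↓`. -/
def Joinable {F : Type} (R : Rules F) (t u : Trm F) : Prop :=
  ∃ v, RedStar R t v ∧ RedStar R u v

/-- Local confluence: `← · → ⊆ →* · *←`. -/
def LocallyConfluent {F : Type} (R : Rules F) : Prop :=
  ∀ t u v, Red R t u → Red R t v → Joinable R u v

/-- `t` is strongly normalizing (terminating): no infinite reduction sequence from `t`. -/
def SN {F : Type} (R : Rules F) (t : Trm F) : Prop := Acc (fun a b => Red R b a) t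

/-- The set of strongly normalizing terms. -/
def SNset {F : Type} (R : Rules F) : Set (Trm F) := {t | SN R t}

/-- `t` is in normal form. -/
def NormalForm {F : Type} (R : Rules F) (t : Trm F) : Prop := ∀ u, ¬ Red R t u

/-- Neutral terms: `(λx:A.t)u v⃗`, `x v⃗`, or `f v⃗` where every rule `f l⃗ → r ∈ R`
satisfies `|l⃗| ≤ |v⃗|`. -/
def Neutral {F : Type} (R : Rules F) (t : Trm F) : Prop :=
  (∃ (A b a : Trm F) (vs : List (Trm F)), t = Trm.appList (.app (.lam A b) a) vs) ∨
  (∃ (x : ℕ) (vs : List (Trm F)), t = Trm.appList (.var x) vs) ∨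
  (∃ (f : F) (vs : List (Trm F)), t = Trm.appList (.sym f) vs ∧
    ∀ (ls : List (Trm F)) (r : Trm F), (Trm.appList (.sym f) ls, r) ∈ R → ls.length ≤ vs.length)

/-- Computability predicates: `S ⊆ SN`, `S` is closed under reduction, and `S` contains
every neutral term all of whose one-step reducts are in `S`. -/
def IsCompPred {F : Type} (R : Rules F) (S : Set (Trm F)) : Prop :=
  S ⊆ SNset R ∧ (∀ t ∈ S, ∀ u, Red R t u → u ∈ S) ∧
  (∀ t, Neutral R t → (∀ u, Red R t u → u ∈ S) → t ∈ S)

/-! # Typing: λP extended with function symbols and conversion modulo `→` -/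

/-- The typing rules of λΠ/R: the rules of λP (in de Bruijn presentation) with the extra
rule (fun) `⊢ f : Θ_f` and conversion up to joinability for `→`. -/
inductive Typing {F : Type} (R : Rules F) (Θ sΘ : F → Trm F) :
    List (Trm F) → Trm F → Trm F → Prop
  | ax : Typing R Θ sΘ [] .type .kind
  | var {Γ A s} : Trm.IsSort s → Typing R Θ sΘ Γ A s →
      Typing R Θ sΘ (A :: Γ) (.var 0) (Trm.shift A)
  | weak {Γ A s b B} : Trm.IsSort s → Typing R Θ sΘ Γ A s → Typing R Θ sΘ Γ b B →
      Typing R Θ sΘ (A :: Γ) (Trm.shift b) (Trm.shift B)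
  | prod {Γ A B s} : Trm.IsSort s → Typing R Θ sΘ Γ A .type → Typing R Θ sΘ (A :: Γ) B s →
      Typing R Θ sΘ Γ (.pi A B) s
  | abs {Γ A b B s} : Trm.IsSort s → Typing R Θ sΘ (A :: Γ) b B →
      Typing R Θ sΘ Γ (.pi A B) s → Typing R Θ sΘ Γ (.lam A b) (.pi A B)
  | app {Γ t a A B} : Typing R Θ sΘ Γ t (.pi A B) → Typing R Θ sΘ Γ a A →
      Typing R Θ sΘ Γ (.app t a) (Trm.subst1 a B)
  | conv {Γ a A B s} : Typing R Θ sΘ Γ a A → Joinable R A B → Typing R Θ sΘ Γ B s →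
      Trm.IsSort s → Typing R Θ sΘ Γ a B
  | symb (f : F) : Trm.IsSort (sΘ f) → Typing R Θ sΘ [] (Θ f) (sΘ f) →
      Typing R Θ sΘ [] (.sym f) (Θ f)

/-- `→` preserves typing (subject reduction). -/
def PresTyping {F : Type} (R : Rules F) (Θ sΘ : F → Trm F) : Prop :=
  ∀ Γ t u T, Typing R Θ sΘ Γ t T → Red R t u → Typing R Θ sΘ Γ u T

/-- A substitution `γ` is well-typed from `Δ` to `Γ` (for a generic typing judgment `Ty`):
for all `(x : T) ∈ Δ`, `Ty Γ (xγ) (Tγ)`. -/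
def SubstTyped {F : Type} (Ty : List (Trm F) → Trm F → Trm F → Prop)
    (Γ : List (Trm F)) (γ : ℕ → Trm F) (Δ : List (Trm F)) : Prop :=
  ∀ i A, Δ[i]? = some A → Ty Γ (γ i) (Trm.subst (fun j => γ (j + i + 1)) A)

/-! # Interpretation of types as computability predicates -/

/-- `𝕀`: partial functions from terms to sets of terms. -/
abbrev Interp (F : Type) := Trm F → Part (Set (Trm F))

/-- Graph inclusion of partial functions. -/
def InterpLE {F : Type} (I J : Interp F) : Prop := ∀ T S, S ∈ I T → S ∈ J T

/-- `I` is the least fixpoint of `φ` on `𝕀` (ordered by graph inclusion). -/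
def IsLfpInterp {F : Type} (φ : Interp F → Interp F) (I : Interp F) : Prop :=
  φ I = I ∧ ∀ J, φ J = J → InterpLE I J

/-- The domain `D(I)`: terminating terms `T` such that whenever `T →* Πx:A.B`,
`A ∈ dom(I)` and `B[x↦a] ∈ dom(I)` for all `a ∈ I(A)`. -/
def domD {F : Type} (R : Rules F) (I : Interp F) : Set (Trm F) :=
  {T | SN R T ∧ ∀ A B, RedStar R T (.pi A B) →
    (I A).Dom ∧ ∀ S ∈ I A, ∀ a ∈ S, (I (Trm.subst1 a B)).Dom}

/-- `{t | ∀ a ∈ I(A), t a ∈ I(B[x↦a])}` (relational reading of the partial function `I`). -/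
def piPart {F : Type} (I : Interp F) (A B : Trm F) : Set (Trm F) :=
  {t | ∀ S ∈ I A, ∀ a ∈ S, ∀ S' ∈ I (Trm.subst1 a B), Trm.app t a ∈ S'}

open Classical in
/-- The monotone function `F : 𝕀 → 𝕀`: `dom(F(I)) = D(I)`; `F(I)(T) = SN` if the normal
form of `T` is not a product; `F(I)(T) = {t | ∀ a ∈ I(A), t a ∈ I(B[x↦a])}` if the normal
form of `T` is `Πx:A.B`. -/
noncomputable def interpF {F : Type} (R : Rules F) (I : Interp F) : Interp F := fun T =>
  ⟨T ∈ domD R I, fun _ =>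
    if h : ∃ A B, RedStar R T (.pi A B) ∧ NormalForm R (.pi A B) then
      piPart I h.choose h.choose_spec.choose
    else SNset R⟩

/-- The value of a partial interpretation at `T` (as a set). -/
def partMem {F : Type} (I : Interp F) (T : Trm F) : Set (Trm F) := {t | ∀ S ∈ I T, t ∈ S}

open Classical in
/-- The interpretation `⟦T⟧σ` of a term `T` wrt a substitution `σ`, relative to the least
fixpoint `I = ℐ` of `interpF`: `⟦s⟧σ = 𝒟` for `s` a sort;
`⟦Πx:A.K⟧σ = {t | ∀ a ∈ ⟦A⟧σ, t a ∈ ⟦K⟧[x↦a,σ]}` for `K` a kind;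
`⟦T⟧σ = ℐ(Tσ)` if `T` is neither a kind nor `KIND` and `Tσ ∈ 𝒟`; `⟦T⟧σ = SN` otherwise. -/
noncomputable def interp {F : Type} (R : Rules F) (I : Interp F) :
    Trm F → (ℕ → Trm F) → Set (Trm F)
  | .type, _ => domD R I
  | .kind, _ => domD R I
  | .pi A B, σ =>
      if Trm.IsKind B then
        {t | ∀ a ∈ interp R I A σ, Trm.app t a ∈ interp R I B (Trm.scons a σ)}
      else if Trm.subst σ (.pi A B) ∈ domD R I then partMem I (Trm.subst σ (.pi A B))
      else SNset R
  | .var n, σ =>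
      if Trm.subst σ (.var n) ∈ domD R I then partMem I (Trm.subst σ (.var n)) else SNset R
  | .sym g, σ =>
      if Trm.subst σ (.sym g) ∈ domD R I then partMem I (Trm.subst σ (.sym g)) else SNset R
  | .app t u, σ =>
      if Trm.subst σ (.app t u) ∈ domD R I then partMem I (Trm.subst σ (.app t u)) else SNset R
  | .lam A b, σ =>
      if Trm.subst σ (.lam A b) ∈ domD R I then partMem I (Trm.subst σ (.lam A b)) else SNset R

/-- `σ ⊨ Γ`: a substitution is adequate wrt an environment. -/
def Models {F : Type} (R : Rules F) (I : Interp F) (σ : ℕ → Trm F) (Γ : List (Trm F)) : Prop :=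
  ∀ i A, Γ[i]? = some A → σ i ∈ interp R I A (fun j => σ (j + i + 1))

/-- The typing map `Θ` is adequate: `f ∈ ⟦Θ_f⟧` whenever `⊢ Θ_f : s_f` and `Θ_f ∈ ⟦s_f⟧`. -/
def Adequate {F : Type} (R : Rules F) (Θ sΘ : F → Trm F) (I : Interp F) : Prop :=
  ∀ f : F, Typing R Θ sΘ [] (Θ f) (sΘ f) → Θ f ∈ interp R I (sΘ f) Trm.var →
    Trm.sym f ∈ interp R I (Θ f) Trm.var

/-- The substitution `[x⃗ ↦ l⃗]` (where `ls` lists the images of variables `0, 1, …`). -/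
def mkSubst {F : Type} (ls : List (Trm F)) : ℕ → Trm F := fun i =>
  (ls[i]?).getD (.var (i - ls.length))

/-- Composition of substitutions: `x ↦ (xγ)σ`. -/
def compSubst {F : Type} (γ σ : ℕ → Trm F) : ℕ → Trm F := fun i => Trm.subst σ (γ i)

/-- The set `ℂ` of terms `f t⃗` with `|t⃗| = arit(Θ_f)`, `⊢ Θ_f : s_f`, `Θ_f ∈ ⟦s_f⟧` and
`[x⃗↦t⃗] ⊨ Γ_f`. -/
def CC {F : Type} (R : Rules F) (Θ sΘ : F → Trm F) (I : Interp F) : Set (Trm F) :=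
  {t | ∃ (f : F) (ts : List (Trm F)), t = Trm.appList (.sym f) ts ∧
    ts.length = Trm.piArity (Θ f) ∧
    Typing R Θ sΘ [] (Θ f) (sΘ f) ∧ Θ f ∈ interp R I (sΘ f) Trm.var ∧
    Models R I (mkSubst ts.reverse) (Trm.telescope (Θ f))}

/-! # Dependency pairs -/

/-- Occurrences of `p` in a term, not at the root, such that `p` is not further applied
(i.e. `p` collects all the arguments of its head at this occurrence). -/
inductive MaxOccNR {F : Type} (p : Trm F) : Trm F → Prop
  | appL {u v} : MaxOccNR p u → MaxOccNR p (.app u v)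
  | appR {u v} : MaxOccNR p v → MaxOccNR p (.app u v)
  | appRroot {u} : MaxOccNR p (.app u p)
  | piL {A B} : MaxOccNR p A → MaxOccNR p (.pi A B)
  | piLroot {B} : MaxOccNR p (.pi p B)
  | piR {A B} : MaxOccNR p B → MaxOccNR p (.pi A B)
  | piRroot {A} : MaxOccNR p (.pi A p)
  | lamL {A b} : MaxOccNR p A → MaxOccNR p (.lam A b)
  | lamLroot {b} : MaxOccNR p (.lam p b)
  | lamR {A b} : MaxOccNR p b → MaxOccNR p (.lam A b)
  | lamRroot {A} : MaxOccNR p (.lam A p)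

/-- `p` occurs in `t` as a maximal application. -/
def MaxOcc {F : Type} (p t : Trm F) : Prop := t = p ∨ MaxOccNR p t

/-- Dependency pairs: `f l⃗ > g m⃗` iff there is a rule `f l⃗ → r ∈ R`, `g` is defined and
`g m⃗` is a subterm of `r` such that `m⃗` are all the arguments to which `g` is applied. -/
def DepPair {F : Type} (R : Rules F) (f : F) (ls : List (Trm F)) (g : F)
    (ms : List (Trm F)) : Prop :=
  Defined R g ∧ ∃ r, (Trm.appList (.sym f) ls, r) ∈ R ∧ MaxOcc (Trm.appList (.sym g) ms) r

/-- `f t⃗ →arg f u⃗`: reduction of exactly one argument. -/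
def ArgRed {F : Type} (R : Rules F) (t u : Trm F) : Prop :=
  ∃ (f : F) (pre post : List (Trm F)) (a b : Trm F), Red R a b ∧
    t = Trm.appList (.sym f) (pre ++ a :: post) ∧ u = Trm.appList (.sym f) (pre ++ b :: post)

/-- `>ₛ`: the closure of the dependency pair relation by substitution and left-application:
`f t₁…t_p >ₛ g u₁…u_q` iff there are a dependency pair `f l₁…l_i > g m₁…m_j` with `i ≤ p`
and `j ≤ q` and a substitution `σ` such that `t_k →* l_kσ` for `k ≤ i` and `m_kσ = u_k`
for `k ≤ j`. -/
def GTsub {F : Type} (R : Rules F) (t u : Trm F) : Prop :=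
  ∃ (f g : F) (ts us ls ms : List (Trm F)) (σ : ℕ → Trm F),
    t = Trm.appList (.sym f) ts ∧ u = Trm.appList (.sym g) us ∧
    DepPair R f ls g ms ∧ ls.length ≤ ts.length ∧ ms.length ≤ us.length ∧
    (∀ (k : ℕ) (tk lk : Trm F), ts[k]? = some tk → ls[k]? = some lk → RedStar R tk (Trm.subst σ lk)) ∧
    (∀ (k : ℕ) (mk : Trm F), ms[k]? = some mk → us[k]? = some (Trm.subst σ mk))

/-- The call relation `≻̃ = →arg* · >ₛ` on `ℂ`. -/
def CallRel {F : Type} (R : Rules F) (Θ sΘ : F → Trm F) (I : Interp F) (t u : Trm F) : Prop :=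
  t ∈ CC R Θ sΘ I ∧ u ∈ CC R Θ sΘ I ∧
    ∃ v, Relation.ReflTransGen (ArgRed R) t v ∧ GTsub R v u

/-! # Precedence and well-structured systems -/

/-- `f ⪰ g` (one step): `g` occurs in `Θ_f` or in the right-hand side of a rule of `f`. -/
def PrecBase {F : Type} (R : Rules F) (Θ : F → Trm F) (f g : F) : Prop :=
  Subterm (.sym g) (Θ f) ∨
  ∃ (ls : List (Trm F)) (r : Trm F), (Trm.appList (.sym f) ls, r) ∈ R ∧ Subterm (.sym g) r

/-- `⪰`: the smallest quasi-order containing `PrecBase`. -/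
def Preceq {F : Type} (R : Rules F) (Θ : F → Trm F) : F → F → Prop :=
  Relation.ReflTransGen (PrecBase R Θ)

/-- `≻`: the strict part of `⪰`. -/
def Prec {F : Type} (R : Rules F) (Θ : F → Trm F) (f g : F) : Prop :=
  Preceq R Θ f g ∧ ¬ Preceq R Θ g f

/-- The restricted type system `⊢_{≺ f}`: as `Typing`, but function symbols may only be
introduced when strictly smaller than `f` in the precedence. -/
inductive LTyp {F : Type} (R : Rules F) (Θ sΘ : F → Trm F) (f : F) :
    List (Trm F) → Trm F → Trm F → Prop
  | ax : LTyp R Θ sΘ f [] .type .kind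
  | var {Γ A s} : Trm.IsSort s → LTyp R Θ sΘ f Γ A s →
      LTyp R Θ sΘ f (A :: Γ) (.var 0) (Trm.shift A)
  | weak {Γ A s b B} : Trm.IsSort s → LTyp R Θ sΘ f Γ A s → LTyp R Θ sΘ f Γ b B →
      LTyp R Θ sΘ f (A :: Γ) (Trm.shift b) (Trm.shift B)
  | prod {Γ A B s} : Trm.IsSort s → LTyp R Θ sΘ f Γ A .type → LTyp R Θ sΘ f (A :: Γ) B s →
      LTyp R Θ sΘ f Γ (.pi A B) s
  | abs {Γ A b B s} : Trm.IsSort s → LTyp R Θ sΘ f (A :: Γ) b B →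
      LTyp R Θ sΘ f Γ (.pi A B) s → LTyp R Θ sΘ f Γ (.lam A b) (.pi A B)
  | app {Γ t a A B} : LTyp R Θ sΘ f Γ t (.pi A B) → LTyp R Θ sΘ f Γ a A →
      LTyp R Θ sΘ f Γ (.app t a) (Trm.subst1 a B)
  | conv {Γ a A B s} : LTyp R Θ sΘ f Γ a A → Joinable R A B → LTyp R Θ sΘ f Γ B s →
      Trm.IsSort s → LTyp R Θ sΘ f Γ a B
  | symb (g : F) : Prec R Θ f g → Trm.IsSort (sΘ g) → LTyp R Θ sΘ f [] (Θ g) (sΘ g) →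
      LTyp R Θ sΘ f [] (.sym g) (Θ g)

/-- The arguments `y⃗γ = [y₁γ, …, y_jγ]` of an instantiated dependency pair right-hand
side, where `y_j` is de Bruijn variable `0`. -/
def dpArgs {F : Type} (γ : ℕ → Trm F) (j : ℕ) : List (Trm F) :=
  (List.range j).reverse.map γ

/-- The restricted type system `⊢_{f l⃗}` (computability closure): as `Typing`, except that
types are required to be typable using symbols smaller than `f` only, and function symbols
are introduced either as undefined constants or through instances of dependency pairs of
`f l⃗`. -/
inductive RTyp {F : Type} (R : Rules F) (Θ sΘ : F → Trm F) (f : F) (ls : List (Trm F)) :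
    List (Trm F) → Trm F → Trm F → Prop
  | ax : RTyp R Θ sΘ f ls [] .type .kind
  | var {Γ A s} : Trm.IsSort s → LTyp R Θ sΘ f Γ A s →
      RTyp R Θ sΘ f ls (A :: Γ) (.var 0) (Trm.shift A)
  | weak {Γ A s b B} : Trm.IsSort s → LTyp R Θ sΘ f Γ A s → RTyp R Θ sΘ f ls Γ b B →
      RTyp R Θ sΘ f ls (A :: Γ) (Trm.shift b) (Trm.shift B)
  | prod {Γ A B s} : Trm.IsSort s → RTyp R Θ sΘ f ls Γ A .type →
      RTyp R Θ sΘ f ls (A :: Γ) B s → RTyp R Θ sΘ f ls Γ (.pi A B) s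
  | abs {Γ A b B s} : Trm.IsSort s → RTyp R Θ sΘ f ls (A :: Γ) b B →
      LTyp R Θ sΘ f Γ (.pi A B) s → RTyp R Θ sΘ f ls Γ (.lam A b) (.pi A B)
  | app {Γ t a A B s} : Trm.IsSort s → RTyp R Θ sΘ f ls Γ t (.pi A B) →
      RTyp R Θ sΘ f ls Γ a A → LTyp R Θ sΘ f Γ (.pi A B) s →
      RTyp R Θ sΘ f ls Γ (.app t a) (Trm.subst1 a B)
  | conv {Γ a A B s s'} : Trm.IsSort s → Trm.IsSort s' → RTyp R Θ sΘ f ls Γ a A →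
      Joinable R A B → LTyp R Θ sΘ f Γ B s → LTyp R Θ sΘ f Γ A s' →
      RTyp R Θ sΘ f ls Γ a B
  | dp {Γ : List (Trm F)} (g : F) (γ : ℕ → Trm F) (j : ℕ) :
      j ≤ Trm.piArity (Θ g) → Trm.IsSort (sΘ g) → LTyp R Θ sΘ f [] (Θ g) (sΘ g) →
      (∀ i A, (Trm.teleN j (Θ g))[i]? = some A →
        RTyp R Θ sΘ f ls Γ (γ i) (Trm.subst (fun k => γ (k + i + 1)) A)) →
      DepPair R f ls g (dpArgs γ j) →
      RTyp R Θ sΘ f ls Γ (Trm.appList (.sym g) (dpArgs γ j)) (Trm.subst γ (Trm.piCodN j (Θ g)))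
  | const (g : F) : ¬ Defined R g → Trm.IsSort (sΘ g) → LTyp R Θ sΘ f [] (Θ g) (sΘ g) →
      RTyp R Θ sΘ f ls [] (.sym g) (Θ g)

/-- `R` is well-structured (wrt the assignment `Δ` of an environment to every rule):
(a) `≻` is well-founded; (b) `|l⃗| ≤ arit(Θ_f)` for every rule `f l⃗ → r`;
(c) `|m⃗| ≤ arit(Θ_g)` for every dependency pair `f l⃗ > g m⃗`;
(d) `Δ_{f l⃗→r} ⊢_{f l⃗} r : U[x⃗↦l⃗]` for every rule `f l⃗ → r`, where `Θ_f = Πx⃗:T⃗.U`. -/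
def WellStructured {F : Type} (R : Rules F) (Θ sΘ : F → Trm F)
    (Δ : Trm F → Trm F → List (Trm F)) : Prop :=
  WellFounded (fun g f => Prec R Θ f g) ∧
  (∀ l r, (l, r) ∈ R → ∀ (f : F) ls, l = Trm.appList (.sym f) ls →
    ls.length ≤ Trm.piArity (Θ f)) ∧
  (∀ (f : F) ls (g : F) ms, DepPair R f ls g ms → ms.length ≤ Trm.piArity (Θ g)) ∧
  (∀ l r, (l, r) ∈ R → ∀ (f : F) ls, l = Trm.appList (.sym f) ls →
    RTyp R Θ sΘ f ls (Δ l r) r (Trm.subst (mkSubst ls.reverse) (Trm.piCodN ls.length (Θ f))))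

/-- `R` is accessible: for every rule `f l⃗ → r` with `Θ_f = Πx⃗:T⃗.U`, `|x⃗| = |l⃗|`, and
every substitution `σ`, `σ ⊨ Δ_{f l⃗→r}` whenever `⊢ Θ_f : s_f`, `Θ_f ∈ ⟦s_f⟧` and
`[x⃗↦l⃗]σ ⊨ x⃗:T⃗`. -/
def Accessible {F : Type} (R : Rules F) (Θ sΘ : F → Trm F) (I : Interp F)
    (Δ : Trm F → Trm F → List (Trm F)) : Prop :=
  ∀ l r, (l, r) ∈ R → ∀ (f : F) ls, l = Trm.appList (.sym f) ls → ∀ σ : ℕ → Trm F,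
    Typing R Θ sΘ [] (Θ f) (sΘ f) → Θ f ∈ interp R I (sΘ f) Trm.var →
    Models R I (compSubst (mkSubst ls.reverse) σ) (Trm.teleN ls.length (Θ f)) →
    Models R I σ (Δ l r)

/-- A term in `𝕂 ∪ {KIND}`. -/
def IsKindLike {F : Type} (t : Trm F) : Prop := Trm.IsKind t ∨ t = .kind

/-- `R` is plain function-passing (PFP): for every rule `f l⃗ → r` with `Θ_f = Πx⃗:T⃗.U` and
`|x⃗| = |l⃗|`, no `l_i` is a kind or `KIND`, and every `(y : T) ∈ Δ_{f l⃗→r}` satisfies: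
either there is `i` with `y = l_i` and `T = T_i[x⃗↦l⃗]`, or `y ∈ FV(l_i)` and `T = D t⃗`
with `D` undefined and `|t⃗| = arit(Θ_D)`. -/
def PFP {F : Type} (R : Rules F) (Θ : F → Trm F) (Δ : Trm F → Trm F → List (Trm F)) : Prop :=
  ∀ l r, (l, r) ∈ R → ∀ (f : F) ls, l = Trm.appList (.sym f) ls →
    (∀ li ∈ ls, ¬ IsKindLike li) ∧
    (∀ i A, (Δ l r)[i]? = some A →
      (∃ (k : ℕ) (Tk : Trm F), ls[k]? = some (Trm.var i) ∧ (Trm.piDoms (Θ f))[k]? = some Tk ∧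
        Trm.rename (fun j => j + i + 1) A = Trm.subst (mkSubst ((ls.take k).reverse)) Tk) ∨
      ((∃ (k : ℕ) (lk : Trm F), ls[k]? = some lk ∧ i ∈ Trm.FV lk) ∧
        ∃ (D : F) (ts : List (Trm F)), Trm.rename (fun j => j + i + 1) A =
          Trm.appList (.sym D) ts ∧ ¬ Defined R D ∧ ts.length = Trm.piArity (Θ D)))

/-! # Size-change termination -/

/-- Entries of size-change matrices: `−1`, `0` or `∞`. -/
inductive SCTe : Type
  | minusOne : SCTe
  | zero : SCTe
  | infty : SCTe
deriving DecidableEq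

/-- Min-plus multiplication of entries (addition, truncated at `−1`). -/
def SCTe.comp : SCTe → SCTe → SCTe
  | .infty, _ => .infty
  | _, .infty => .infty
  | .minusOne, _ => .minusOne
  | _, .minusOne => .minusOne
  | .zero, .zero => .zero

/-- Minimum of entries (`−1 < 0 < ∞`). -/
def SCTe.min : SCTe → SCTe → SCTe
  | .minusOne, _ => .minusOne
  | _, .minusOne => .minusOne
  | .zero, _ => .zero
  | .infty, x => x

/-- Base of the relation `⊵`: `f t₁…t_n ⊵ t_i` for `f ∈ F`. -/
def ArgSubBase {F : Type} (t u : Trm F) : Prop :=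
  ∃ (f : F) (ts : List (Trm F)), t = Trm.appList (.sym f) ts ∧ u ∈ ts

/-- `⊵`: the smallest transitive relation such that `f t₁…t_n ⊵ t_i` for `f ∈ F`. -/
def ArgGT {F : Type} : Trm F → Trm F → Prop := Relation.TransGen ArgSubBase

open Classical in
/-- The size-change matrix of a dependency pair `f l₁…l_p > g m₁…m_q`:
`a_{ij} = −1` if `l_i ⊵ m_j`, `a_{ij} = 0` if `l_i = m_j`, `a_{ij} = ∞` otherwise
(in particular if `i > p` or `j > q`). -/
noncomputable def dpMatrix {F : Type} (ls ms : List (Trm F)) : ℕ → ℕ → SCTe := fun i j =>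
  match ls[i]?, ms[j]? with
  | some li, some mj =>
      if ArgGT li mj then .minusOne else if li = mj then .zero else .infty
  | _, _ => .infty

/-- Min-plus product of matrices, the middle dimension being `d`. -/
def matComp (d : ℕ) (M N : ℕ → ℕ → SCTe) : ℕ → ℕ → SCTe := fun i j =>
  ((List.range d).map fun k => (M i k).comp (N k j)).foldr SCTe.min .infty

/-- The transitive closure of the call graph of `R`: edges are labeled by the matrices of
the dependency pairs, multiplied in the min-plus semiring along paths. -/
inductive TCEdge {F : Type} (R : Rules F) (Θ : F → Trm F) : F → F → (ℕ → ℕ → SCTe) → Prop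
  | base {f g : F} {ls ms : List (Trm F)} : DepPair R f ls g ms →
      TCEdge R Θ f g (dpMatrix ls ms)
  | comp {f g h : F} {M N : ℕ → ℕ → SCTe} : TCEdge R Θ f g M → TCEdge R Θ g h N →
      TCEdge R Θ f h (matComp (Trm.piArity (Θ g)) M N)

/-- `R` is size-change terminating: in the transitive closure of the call graph, every
idempotent matrix labeling a loop has some `−1` on its diagonal. -/
def SCT {F : Type} (R : Rules F) (Θ : F → Trm F) : Prop :=
  ∀ (f : F) (M : ℕ → ℕ → SCTe), TCEdge R Θ f f M → matComp (Trm.piArity (Θ f)) M M = M →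
    ∃ i < Trm.piArity (Θ f), M i i = SCTe.minusOne
namespace Trm

variable {F : Type}

theorem rename_rename (t : Trm F) (ρ ρ' : ℕ → ℕ) :
    rename ρ' (rename ρ t) = rename (ρ' ∘ ρ) t := by
  have up_comp (ρ ρ' : ℕ → ℕ) : upRen ρ' ∘ upRen ρ = upRen (ρ' ∘ ρ) := by
    funext n; cases n <;> rfl
  induction t generalizing ρ ρ' with
  | type | kind | var | sym => rfl
  | pi A B ihA ihB | lam A B ihA ihB => simp [rename, ihA, ihB, up_comp]
  | app t u iht ihu => simp [rename, iht, ihu]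

theorem subst_rename (t : Trm F) (ρ : ℕ → ℕ) (σ : ℕ → Trm F) :
    subst σ (rename ρ t) = subst (σ ∘ ρ) t := by
  have up_comp (ρ : ℕ → ℕ) (σ : ℕ → Trm F) : up σ ∘ upRen ρ = up (σ ∘ ρ) := by
    funext n; cases n <;> rfl
  induction t generalizing ρ σ with
  | type | kind | var | sym => rfl
  | pi A B ihA ihB | lam A B ihA ihB => simp [rename, subst, ihA, ihB, up_comp]
  | app t u iht ihu => simp [rename, subst, iht, ihu]

theorem rename_subst (t : Trm F) (σ : ℕ → Trm F) (ρ : ℕ → ℕ) :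
    rename ρ (subst σ t) = subst (rename ρ ∘ σ) t := by
  have up_comp (σ : ℕ → Trm F) (ρ : ℕ → ℕ) :
      rename (upRen ρ) ∘ up σ = up (rename ρ ∘ σ) := by
    funext n
    cases n with
    | zero => rfl
    | succ n => simp only [Function.comp, up, rename_rename]; rfl
  induction t generalizing ρ σ with
  | type | kind | var | sym => rfl
  | pi A B ihA ihB | lam A B ihA ihB => simp [rename, subst, ihA, ihB, up_comp]
  | app t u iht ihu => simp [rename, subst, iht, ihu]

theorem subst_subst (t : Trm F) (σ τ : ℕ → Trm F) :
    subst τ (subst σ t) = subst (subst τ ∘ σ) t := by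
  have up_comp (σ τ : ℕ → Trm F) : subst (up τ) ∘ up σ = up (subst τ ∘ σ) := by
    funext n
    cases n with
    | zero => rfl
    | succ n => simp only [Function.comp, up, subst_rename, rename_subst]; rfl
  induction t generalizing σ τ with
  | type | kind | var | sym => rfl
  | pi A B ihA ihB | lam A B ihA ihB => simp [subst, ihA, ihB, up_comp]
  | app t u iht ihu => simp [subst, iht, ihu]

theorem subst_var (t : Trm F) : subst var t = t := by
  have up_var : up (var : ℕ → Trm F) = var := by
    funext n; cases n <;> rfl
  induction t with
  | type | kind | var | sym => rfl
  | pi A B ihA ihB | lam A B ihA ihB => simp [subst, ihA, ihB, up_var]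
  | app t u iht ihu => simp [subst, iht, ihu]

/-- Substitution commutes with the contraction of a redex. -/
theorem subst_subst1 (σ : ℕ → Trm F) (a b : Trm F) :
    subst σ (subst1 a b) = subst1 (subst σ a) (subst (up σ) b) := by
  simp only [subst1, subst_subst]
  congr 1
  funext n
  cases n with
  | zero => rfl
  | succ n =>
    simp only [Function.comp, up, scons, subst_rename]
    exact (subst_var (σ n)).symm

/-- The head of the term is a function symbol. -/
def SymHeaded : Trm F → Prop
  | .sym _ => True
  | .app t _ => SymHeaded t
  | _ => False

theorem SymHeaded.appList {h : Trm F} (hh : SymHeaded h) (ts : List (Trm F)) :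
    SymHeaded (Trm.appList h ts) := by
  induction ts generalizing h with
  | nil => exact hh
  | cons t ts ih => exact ih (h := .app h t) hh

theorem SymHeaded.subst {t : Trm F} (ht : SymHeaded t) (σ : ℕ → Trm F) :
    SymHeaded (Trm.subst σ t) := by
  induction t with
  | sym => trivial
  | app t u iht => exact iht ht
  | type | kind | var | pi | lam => exact ht.elim

end Trm

section Reduction

variable {F : Type} {R : Rules F}

theorem IsRewriteSystem.symHeaded_subst (hR : IsRewriteSystem R) {l r : Trm F}
    (h : (l, r) ∈ R) (σ : ℕ → Trm F) : (Trm.subst σ l).SymHeaded := by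
  obtain ⟨-, f, ls, hl⟩ := hR _ h
  obtain rfl : l = Trm.appList (.sym f) ls := hl
  exact (Trm.SymHeaded.appList (h := .sym f) trivial ls).subst σ

theorem Red.subst {t u : Trm F} (h : Red R t u) (σ : ℕ → Trm F) :
    Red R (Trm.subst σ t) (Trm.subst σ u) := by
  induction h generalizing σ with
  | beta A b a => rw [Trm.subst_subst1]; exact .beta _ _ _
  | rule τ h => simp only [Trm.subst_subst]; exact .rule _ h
  | appL _ ih => exact .appL (ih σ)
  | appR _ ih => exact .appR (ih σ)
  | piL _ ih => exact .piL (ih σ)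
  | piR _ ih => exact .piR (ih _)
  | lamL _ ih => exact .lamL (ih σ)
  | lamR _ ih => exact .lamR (ih _)

theorem SN.of_subst {σ : ℕ → Trm F} {t : Trm F} (h : SN R (Trm.subst σ t)) : SN R t :=
  Subrelation.accessible (fun h => Red.subst h σ) (InvImage.accessible (Trm.subst σ) h)

theorem IsRewriteSystem.normalForm_var (hR : IsRewriteSystem R) (n : ℕ) :
    NormalForm R (.var n) := by
  intro u h
  generalize ht : (Trm.var n : Trm F) = t at h
  cases h with
  | rule σ h => exact (ht ▸ hR.symHeaded_subst h σ :)
  | _ => cases ht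

/-- Reducts of an abstraction are obtained by reducing its annotation or its body. -/
theorem IsRewriteSystem.red_lam (hR : IsRewriteSystem R) {A b u : Trm F}
    (h : Red R (.lam A b) u) :
    (∃ A', Red R A A' ∧ u = .lam A' b) ∨ ∃ b', Red R b b' ∧ u = .lam A b' := by
  generalize ht : Trm.lam A b = t at h
  cases h with
  | rule σ h => exact (ht ▸ hR.symHeaded_subst h σ : Trm.SymHeaded (.lam A b)).elim
  | lamL h => cases ht; exact .inl ⟨_, h, rfl⟩
  | lamR h => cases ht; exact .inr ⟨_, h, rfl⟩
  | _ => cases ht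

/-- The possible reducts of a β-redex. -/
theorem IsRewriteSystem.red_app_lam (hR : IsRewriteSystem R) {A b a u : Trm F}
    (h : Red R (.app (.lam A b) a) u) :
    u = Trm.subst1 a b ∨ (∃ A', Red R A A' ∧ u = .app (.lam A' b) a) ∨
      (∃ b', Red R b b' ∧ u = .app (.lam A b') a) ∨
      ∃ a', Red R a a' ∧ u = .app (.lam A b) a' := by
  generalize ht : Trm.app (.lam A b) a = t at h
  cases h with
  | beta => cases ht; exact .inl rfl
  | rule σ h => exact (ht ▸ hR.symHeaded_subst h σ : Trm.SymHeaded (.app (.lam A b) a)).elim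
  | appL h =>
    cases ht
    rcases hR.red_lam h with ⟨A', hA, rfl⟩ | ⟨b', hb, rfl⟩
    · exact .inr (.inl ⟨A', hA, rfl⟩)
    · exact .inr (.inr (.inl ⟨b', hb, rfl⟩))
  | appR h => cases ht; exact .inr (.inr (.inr ⟨_, h, rfl⟩))
  | _ => cases ht

theorem IsCompPred.var_mem (hR : IsRewriteSystem R) {S : Set (Trm F)} (hS : IsCompPred R S)
    (n : ℕ) : Trm.var n ∈ S :=
  hS.2.2 _ (.inr (.inl ⟨n, [], rfl⟩)) fun u h => (hR.normalForm_var n u h).elim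

end Reduction

/-- Lemma 4(f) of the paper. Let `P` be a computability predicate and,
for each `a ∈ P`, `Q(a)` a computability predicate such that `Q(a') ⊆ Q(a)` whenever
`a → a'`. If `A ∈ SN` and `b[x↦a] ∈ Q(a)` for all `a ∈ P`, then
`λx:A.b ∈ {t | ∀ a ∈ P, t a ∈ Q(a)}`. -/
theorem comp_abs {F : Type} (R : Rules F)
    (hRS : IsRewriteSystem R)
    (P : Set (Trm F)) (Q : Trm F → Set (Trm F))
    (hP : IsCompPred R P)
    (hQ : ∀ a ∈ P, IsCompPred R (Q a))
    (hmono : ∀ a ∈ P, ∀ a', Red R a a' → Q a' ⊆ Q a)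
    (A b : Trm F)
    (hA : SN R A)
    (hb : ∀ a ∈ P, Trm.subst1 a b ∈ Q a) :
    Trm.lam A b ∈ {t | ∀ a ∈ P, Trm.app t a ∈ Q a} := by
  have hbSN : SN R b := SN.of_subst ((hQ _ (hP.var_mem hRS 0)).1 (hb _ (hP.var_mem hRS 0)))
  intro a ha
  have haSN : SN R a := hP.1 ha
  induction hA generalizing b a with
  | intro A _ ihA =>
  induction hbSN generalizing a with
  | intro b hb_acc ihb =>
  induction haSN with
  | intro a _ iha =>
  refine (hQ a ha).2.2 _ (.inl ⟨A, b, a, [], rfl⟩) fun u hu => ?_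
  rcases hRS.red_app_lam hu with rfl | ⟨A', hA', rfl⟩ | ⟨b', hb', rfl⟩ | ⟨a', ha', rfl⟩
  · exact hb a ha
  · exact ihA A' hA' b hb ⟨b, hb_acc⟩ a ha (hP.1 ha)
  · exact ihb b' hb' (fun c hc => (hQ c hc).2.1 _ (hb c hc) _ (hb'.subst _)) a ha (hP.1 ha)
  · exact hmono a ha a' ha' (iha a' ha' (hP.2.1 a ha a' ha'))
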